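/- Let (A, α, γ) be a graded C*-dynamical system, β ∈ ℝ, ω a γ-invariant (α, β)-KMS state on A with GNS triple (H, π, Ω), M := π(A)'' the enveloping von Neumann algebra with modular conjugation J associated to (M, Ω), and V the unique selfadjoint unitary on H with V π(a) V = π(γ(a)) and V Ω = Ω. Then the map Ξ sending a hermitian γ-twisted (α, β)-KMS functional ρ dominated by ω to the unique operator R_ρ ∈ M with ρ(a) = ⟨Ω, π(a) R_ρ Ω⟩ for all a ∈ A is a bijection from the set F_β(A, α, γ, ω) of such functionals onto the set of selfadjoint elements of the V-twisted center Z(M, V) of norm at most 1, and Ξ preserves convex combinations. -/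

import Mathlib

open scoped InnerProductSpace ComplexOrder

noncomputable section

/-- A strongly continuous one-parameter group of *-automorphisms of a unital C*-algebra. -/
structure Dynamics (A : Type*) [CStarAlgebra A] where
  α : ℝ → A ≃⋆ₐ[ℂ] A
  α_zero : ∀ a, α 0 a = a
  α_add : ∀ s t a, α (s + t) a = α s (α t a)
  α_cont : ∀ a, Continuous fun t => α t a

variable {A : Type*} [CStarAlgebra A]

/-- `f` is the entire analytic extension of `t ↦ α_t a`; an element admitting such an
extension is an entire analytic element for the dynamics. -/
def Dynamics.IsAnalyticExt (d : Dynamics A) (a : A) (f : ℂ → A) : Prop :=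
  Differentiable ℂ f ∧ ∀ t : ℝ, f (t : ℂ) = d.α t a

/-- A state: positive normalized linear functional. -/
def IsState (ω : A → ℂ) : Prop :=
  IsLinearMap ℂ ω ∧ (∀ a : A, 0 ≤ ω (star a * a)) ∧ ω 1 = 1

/-- The `(α, β)`-KMS condition: `ω (a * α_{iβ}(b)) = ω (b * a)` for entire analytic `a, b`. -/
def Dynamics.IsKMS (d : Dynamics A) (β : ℝ) (ω : A → ℂ) : Prop :=
  IsState ω ∧ ∀ a b : A, ∀ fa fb : ℂ → A, d.IsAnalyticExt a fa → d.IsAnalyticExt b fb →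
    ω (a * fb (Complex.I * β)) = ω (b * a)

/-- A graded C*-dynamical system: dynamics plus a commuting involutive grading. -/
structure GradedDyn (A : Type*) [CStarAlgebra A] extends Dynamics A where
  γ : A ≃⋆ₐ[ℂ] A
  γ_invol : ∀ a, γ (γ a) = a
  γ_comm : ∀ t a, γ (α t a) = α t (γ a)

/-- The `γ`-twisted `(α, β)`-KMS condition: `ρ (a * α_{iβ}(b)) = ρ (b * γ a)`. -/
def Dynamics.IsTwistedKMS (d : Dynamics A) (γ : A ≃⋆ₐ[ℂ] A) (β : ℝ) (ρ : A → ℂ) : Prop :=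
  IsLinearMap ℂ ρ ∧ ∀ a b : A, ∀ fa fb : ℂ → A, d.IsAnalyticExt a fa → d.IsAnalyticExt b fb →
    ρ (a * fb (Complex.I * β)) = ρ (b * γ a)

/-- Hermitian functional: `ρ(a*) = conj (ρ a)`. -/
def IsHermitian (ρ : A → ℂ) : Prop := ∀ a, ρ (star a) = starRingEnd ℂ (ρ a)

/-- `ρ` is dominated by `ω`: `|ρ(a* b)|² ≤ ω(a* a) ω(b* b)`. -/
def Dominated (ω ρ : A → ℂ) : Prop :=
  ∀ a b : A, (‖ρ (star a * b)‖ : ℂ) ^ 2 ≤ ω (star a * a) * ω (star b * b)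

/-- The set `F_β(A, α, γ, ω)`: hermitian `γ`-twisted `(α,β)`-KMS functionals dominated by `ω`. -/
def TwistedKMSDom (d : Dynamics A) (γ : A ≃⋆ₐ[ℂ] A) (β : ℝ) (ω ρ : A → ℂ) : Prop :=
  d.IsTwistedKMS γ β ρ ∧ IsHermitian ρ ∧ Dominated ω ρ

/-- Product of the `ℤ₂`-crossed product `A ⋊_γ ℤ₂` realized on `A ⊕ A`. -/
def cpMul (γ : A ≃⋆ₐ[ℂ] A) (p q : A × A) : A × A :=
  (p.1 * q.1 + p.2 * γ q.2, p.1 * q.2 + p.2 * γ q.1)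

/-- Involution of the crossed product. -/
def cpStar (γ : A ≃⋆ₐ[ℂ] A) (p : A × A) : A × A := (star p.1, γ (star p.2))

/-- Unit of the crossed product. -/
def cpOne : A × A := (1, 0)

/-- A state on the crossed product. -/
def cpIsState (γ : A ≃⋆ₐ[ℂ] A) (W : A × A → ℂ) : Prop :=
  IsLinearMap ℂ W ∧ (∀ p : A × A, 0 ≤ W (cpMul γ (cpStar γ p) p)) ∧ W (cpOne : A × A) = 1

/-- Entire analytic extension for the componentwise extended dynamics `𝛂` on `A ⊕ A`. -/
def cpIsAnalyticExt (d : Dynamics A) (p : A × A) (f : ℂ → A × A) : Prop :=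
  Differentiable ℂ f ∧ ∀ t : ℝ, f (t : ℂ) = (d.α t p.1, d.α t p.2)

/-- `(𝛂, β)`-KMS states of the crossed product `A ⋊_γ ℤ₂`. -/
def cpIsKMS (d : Dynamics A) (γ : A ≃⋆ₐ[ℂ] A) (β : ℝ) (W : A × A → ℂ) : Prop :=
  cpIsState γ W ∧ ∀ p q : A × A, ∀ fp fq : ℂ → A × A,
    cpIsAnalyticExt d p fp → cpIsAnalyticExt d q fq →
    W (cpMul γ p (fq (Complex.I * β))) = W (cpMul γ q p)


/-- The enveloping von Neumann algebra `M = π(A)''` of a representation `π`. -/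
def envVN {A : Type*} [CStarAlgebra A]
    {Hs : Type*} [NormedAddCommGroup Hs] [InnerProductSpace ℂ Hs] [CompleteSpace Hs]
    (π : A →⋆ₐ[ℂ] (Hs →L[ℂ] Hs)) : Set (Hs →L[ℂ] Hs) :=
  Set.centralizer (Set.centralizer (Set.range fun a => π a))

open Filter Topology MeasureTheory in
theorem entire_eq_of_real {E : Type*} [NormedAddCommGroup E] [NormedSpace ℂ E] [CompleteSpace E]
    {f g : ℂ → E} (hf : Differentiable ℂ f) (hg : Differentiable ℂ g)
    (h : ∀ t : ℝ, f (t : ℂ) = g (t : ℂ)) : f = g := by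
  have hfa : AnalyticOnNhd ℂ f Set.univ := fun z _ => hf.analyticAt z
  have hga : AnalyticOnNhd ℂ g Set.univ := fun z _ => hg.analyticAt z
  refine hfa.eq_of_frequently_eq hga (z₀ := 0) ?_
  have ht : Tendsto (fun n : ℕ => (((1 / ((n : ℝ) + 1) : ℝ)) : ℂ)) atTop (𝓝[≠] 0) := by
    rw [tendsto_nhdsWithin_iff]
    constructor
    · have := (Complex.continuous_ofReal.tendsto 0).comp tendsto_one_div_add_atTop_nhds_zero_nat
      simpa [Function.comp_def] using this
    · filter_upwards with n
      have : (0 : ℝ) < 1 / ((n : ℝ) + 1) := by positivity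
      simpa only [Set.mem_compl_iff, Set.mem_singleton_iff, Complex.ofReal_eq_zero] using this.ne'
  exact ht.frequently (Frequently.of_forall fun n => h _)

theorem Dynamics.norm_α (d : Dynamics A) (t : ℝ) (a : A) : ‖d.α t a‖ = ‖a‖ :=
  StarAlgEquiv.norm_map (d.α t) a

/-- The automorphism as a continuous linear map. -/
def Dynamics.αL (d : Dynamics A) (t : ℝ) : A →L[ℂ] A :=
  LinearMap.mkContinuous (d.α t).toAlgEquiv.toLinearMap 1 (fun a => by
    simpa using (d.norm_α t a).le)

theorem Dynamics.αL_apply (d : Dynamics A) (t : ℝ) (a : A) : d.αL t a = d.α t a := rfl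

theorem Dynamics.IsAnalyticExt.at_zero {d : Dynamics A} {a : A} {f : ℂ → A}
    (h : d.IsAnalyticExt a f) : f 0 = a := by
  have := h.2 0
  rw [d.α_zero] at this
  simpa using this

theorem Dynamics.IsAnalyticExt.add_real {d : Dynamics A} {a : A} {f : ℂ → A}
    (h : d.IsAnalyticExt a f) (t : ℝ) (w : ℂ) : f (w + t) = d.α t (f w) := by
  have h1 : Differentiable ℂ fun w => f (w + t) := h.1.comp (by fun_prop)
  have h2 : Differentiable ℂ fun w => d.αL t (f w) := (d.αL t).differentiable.comp h.1
  have := entire_eq_of_real h1 h2 (fun s => by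
    rw [Dynamics.αL_apply, h.2 s, ← d.α_add, ← h.2, add_comm t s]; push_cast; rfl)
  exact congrFun this w

theorem Dynamics.IsAnalyticExt.shift {d : Dynamics A} {a : A} {f : ℂ → A}
    (h : d.IsAnalyticExt a f) (w : ℂ) : d.IsAnalyticExt (f w) (fun z => f (w + z)) :=
  ⟨h.1.comp (by fun_prop), fun t => h.add_real t w⟩

theorem Dynamics.IsAnalyticExt.mul {d : Dynamics A} {a b : A} {f g : ℂ → A}
    (hf : d.IsAnalyticExt a f) (hg : d.IsAnalyticExt b g) :
    d.IsAnalyticExt (a * b) (fun z => f z * g z) :=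
  ⟨hf.1.mul hg.1, fun t => by beta_reduce; rw [hf.2, hg.2, map_mul]⟩

theorem Dynamics.IsAnalyticExt.add {d : Dynamics A} {a b : A} {f g : ℂ → A}
    (hf : d.IsAnalyticExt a f) (hg : d.IsAnalyticExt b g) :
    d.IsAnalyticExt (a + b) (fun z => f z + g z) :=
  ⟨hf.1.add hg.1, fun t => by beta_reduce; rw [hf.2, hg.2, map_add]⟩

theorem Dynamics.IsAnalyticExt.smul {d : Dynamics A} {a : A} {f : ℂ → A}
    (hf : d.IsAnalyticExt a f) (c : ℂ) :
    d.IsAnalyticExt (c • a) (fun z => c • f z) :=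
  ⟨hf.1.const_smul c, fun t => by beta_reduce; rw [hf.2, map_smul]⟩

theorem Dynamics.isAnalyticExt_one (d : Dynamics A) :
    d.IsAnalyticExt 1 (fun _ => 1) :=
  ⟨by fun_prop, fun t => by rw [map_one]⟩

theorem Dynamics.IsAnalyticExt.star {d : Dynamics A} {a : A} {f : ℂ → A}
    (hf : d.IsAnalyticExt a f) :
    d.IsAnalyticExt (star a) (fun z => star (f (starRingEnd ℂ z))) := by
  constructor
  · intro z
    have := (hf.1 (starRingEnd ℂ z)).star_star
    simpa [Function.comp_def] using this
  · intro t
    beta_reduce; rw [Complex.conj_ofReal, hf.2, map_star]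

/-- Liouville. -/
theorem Dynamics.IsAnalyticExt.const {d : Dynamics A} {a : A} {f : ℂ → A}
    (h : d.IsAnalyticExt a f) (φ : A →L[ℂ] ℂ) (κ : ℝ) (c : ℂ) (hc : ‖c‖ = 1)
    (hper : ∀ s : ℂ, φ (f (Complex.I * κ * (s + 1))) = c * φ (f (Complex.I * κ * s))) (s s' : ℂ) :
    φ (f (Complex.I * κ * s)) = φ (f (Complex.I * κ * s')) := by
  set g : ℂ → ℂ := fun s => φ (f (Complex.I * κ * s)) with hg
  have hgd : Differentiable ℂ g := φ.differentiable.comp (h.1.comp (by fun_prop))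
  have hn : ∀ (n : ℕ) (s : ℂ), ‖g (s + n)‖ = ‖g s‖ := by
    intro n
    induction n with
    | zero => simp
    | succ k ih =>
      intro s
      have := hper (s + k)
      push_cast
      rw [← add_assoc, ← ih s]
      change g (s + k + 1) = c * g (s + k) at this
      rw [this, norm_mul, hc, one_mul]
  have hz : ∀ (n : ℤ) (s : ℂ), ‖g (s + n)‖ = ‖g s‖ := by
    intro n s
    obtain ⟨k, rfl | rfl⟩ := n.eq_nat_or_neg
    · simpa using hn k s
    · have := hn k (s + ((-(k : ℤ) : ℤ) : ℂ))
      rw [← this]; congr 2; push_cast; ring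
  have hcont : Continuous fun x : ℝ => ‖f (Complex.I * κ * x)‖ :=
    (h.1.continuous.comp (by fun_prop)).norm
  obtain ⟨C, hC⟩ := (isCompact_Icc (a := (0 : ℝ)) (b := 1)).bddAbove_image hcont.continuousOn
  have hb : ∀ s, ‖g s‖ ≤ ‖φ‖ * C := by
    intro s
    have e := hz ⌊s.re⌋ (s - ⌊s.re⌋)
    rw [sub_add_cancel] at e
    rw [e]
    refine (φ.le_opNorm _).trans (mul_le_mul_of_nonneg_left ?_ (norm_nonneg _))
    have e2 : Complex.I * κ * (s - ⌊s.re⌋) =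
        Complex.I * κ * ((Int.fract s.re : ℝ) : ℂ) + ((-(κ * s.im) : ℝ) : ℂ) := by
      have e3 : s = (s.re : ℂ) + s.im * Complex.I := (Complex.re_add_im s).symm
      have e4 : ((Int.fract s.re : ℝ) : ℂ) = s.re - ⌊s.re⌋ := by
        rw [Int.fract]; push_cast; rfl
      rw [e4]
      conv_lhs => rw [show s - (⌊s.re⌋ : ℂ) = (s.re : ℂ) + s.im * Complex.I - ⌊s.re⌋ by rw [← e3]]
      push_cast
      linear_combination (κ * s.im : ℂ) * Complex.I_mul_I
    rw [e2, h.add_real, d.norm_α]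
    exact hC ⟨_, ⟨Int.fract_nonneg _, (Int.fract_lt_one _).le⟩, rfl⟩
  exact hgd.apply_eq_apply_of_bounded
    (isBounded_iff_forall_norm_le.2 ⟨‖φ‖ * C, by rintro _ ⟨s, rfl⟩; exact hb s⟩) s s'

open Filter Topology MeasureTheory in
theorem gauss_differentiable {g : ℝ → A} (hg : Continuous g) (B : ℝ) (hB : ∀ t, ‖g t‖ ≤ B) :
    Differentiable ℂ fun w : ℂ => ∫ t : ℝ, Complex.exp (-(t - w) ^ 2) • g t := by
  have hB0 : 0 ≤ B := (norm_nonneg _).trans (hB 0)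
  intro w₀
  set C : ℝ := ‖w₀‖ + 1 with hC
  -- pointwise norm bound
  have key : ∀ w ∈ Metric.ball w₀ 1, ∀ t : ℝ,
      ‖Complex.exp (-(t - w) ^ 2)‖ ≤ Real.exp (3 * C ^ 2) * Real.exp (-(1/2) * t ^ 2) := by
    intro w hw t
    have hwn : ‖w‖ ≤ C := by
      have h1 : ‖w - w₀‖ < 1 := by simpa [dist_eq_norm] using hw
      have h2 := norm_add_le (w - w₀) w₀
      rw [sub_add_cancel] at h2
      linarith
    rw [Complex.norm_exp, ← Real.exp_add]
    apply Real.exp_le_exp.2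
    have hre : (-((t : ℂ) - w) ^ 2).re = -(t - w.re) ^ 2 + w.im ^ 2 := by
      simp [pow_two]; ring
    rw [hre]
    have a1 := abs_le.1 ((Complex.abs_re_le_norm w).trans hwn)
    have a2 := abs_le.1 ((Complex.abs_im_le_norm w).trans hwn)
    nlinarith [sq_nonneg (t / 2 - w.re), sq_nonneg (t - 2 * w.re), mul_nonneg (sub_nonneg.2 a1.2) (by linarith : 0 ≤ C + w.re), mul_nonneg (sub_nonneg.2 a2.2) (by linarith : 0 ≤ C + w.im)]
  have hint : Integrable fun t : ℝ => Real.exp (-(1/4) * t ^ 2) :=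
    integrable_exp_neg_mul_sq (by norm_num)
  have hint2 : Integrable fun t : ℝ => Real.exp (-(1/2) * t ^ 2) :=
    integrable_exp_neg_mul_sq (by norm_num)
  have hcF : ∀ w : ℂ, Continuous fun t : ℝ => Complex.exp (-(t - w) ^ 2) • g t := by
    intro w
    fun_prop
  have hmem : w₀ ∈ Metric.ball w₀ (1 : ℝ) := Metric.mem_ball_self one_pos
  have main := hasDerivAt_integral_of_dominated_loc_of_deriv_le
    (μ := (volume : Measure ℝ)) (𝕜 := ℂ)
    (F := fun (w : ℂ) (t : ℝ) => Complex.exp (-(t - w) ^ 2) • g t)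
    (F' := fun (w : ℂ) (t : ℝ) => (Complex.exp (-(t - w) ^ 2) * (2 * (t - w))) • g t)
    (x₀ := w₀) (s := Metric.ball w₀ 1)
    (bound := fun t => (Real.exp (3 * C ^ 2) * (4 + 2 * C) * B) * Real.exp (-(1/4) * t ^ 2))
    (Metric.ball_mem_nhds _ one_pos)
    (Eventually.of_forall fun w => (hcF w).aestronglyMeasurable)
    ?_ ?_ ?_ ?_ ?_
  · exact main.2.differentiableAt
  · refine (hint2.const_mul (Real.exp (3 * C ^ 2) * B)).mono' (hcF w₀).aestronglyMeasurable
      (Eventually.of_forall fun t => ?_)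
    rw [norm_smul]
    calc _ ≤ (Real.exp (3 * C ^ 2) * Real.exp (-(1/2) * t ^ 2)) * B :=
          mul_le_mul (key w₀ hmem t) (hB t) (norm_nonneg _) (by positivity)
      _ = _ := by ring
  · have : Continuous fun t : ℝ => (Complex.exp (-(t - w₀) ^ 2) * (2 * (t - w₀))) • g t := by
      fun_prop
    exact this.aestronglyMeasurable
  · refine Eventually.of_forall fun t w hw => ?_
    rw [norm_smul, norm_mul]
    have hwn : ‖w‖ ≤ C := by
      have h1 : ‖w - w₀‖ < 1 := by simpa [dist_eq_norm] using hw
      have h2 := norm_add_le (w - w₀) w₀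
      rw [sub_add_cancel] at h2
      linarith
    have b1 : ‖(2 : ℂ) * (t - w)‖ ≤ (4 + 2 * C) * Real.exp (1/4 * t ^ 2) := by
      rw [norm_mul]
      have : ‖(t : ℂ) - w‖ ≤ |t| + C := by
        refine (norm_sub_le _ _).trans ?_
        rw [Complex.norm_real, Real.norm_eq_abs]
        linarith
      have e1 : 1 + 1/4 * t ^ 2 ≤ Real.exp (1/4 * t ^ 2) := by
        have := Real.add_one_le_exp (1/4 * t ^ 2); linarith
      have hC0 : 0 ≤ C := by positivity
      have e2 : |t| ≤ 1 + 1/4 * t ^ 2 := by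
        have := sq_nonneg (|t| / 2 - 1)
        have e := sq_abs t
        nlinarith
      have e3 : 1 ≤ Real.exp (1/4 * t ^ 2) := by nlinarith [sq_nonneg t]
      have : ‖(2 : ℂ)‖ = 2 := by simp
      rw [this]
      nlinarith [mul_le_mul_of_nonneg_left e3 hC0]
    have hC0 : 0 ≤ C := by positivity
    have e5 : Real.exp (-(1/2) * t ^ 2) * Real.exp (1/4 * t ^ 2) = Real.exp (-(1/4) * t ^ 2) := by
      rw [← Real.exp_add]; congr 1; ring
    calc _ ≤ ((Real.exp (3 * C ^ 2) * Real.exp (-(1/2) * t ^ 2)) *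
          ((4 + 2 * C) * Real.exp (1/4 * t ^ 2))) * B :=
          mul_le_mul (mul_le_mul (key w hw t) b1 (norm_nonneg _) (by positivity)) (hB t)
            (norm_nonneg _) (by positivity)
      _ = _ := by rw [← e5]; ring
  · exact hint.const_mul _
  · refine Eventually.of_forall fun t w _ => ?_
    have h1 : HasDerivAt (fun w : ℂ => -((t : ℂ) - w) ^ 2) (2 * (t - w)) w := by
      have := (((hasDerivAt_id' w).const_sub (t : ℂ)).pow 2).neg
      refine HasDerivAt.congr_deriv this ?_
      simp
    exact (h1.cexp).smul_const (g t)

open Filter Topology MeasureTheory in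
theorem Dynamics.dense_analytic (d : Dynamics A) :
    Dense {a : A | ∃ f, d.IsAnalyticExt a f} := by
  intro a
  set c : ℕ → ℝ := fun n => (n : ℝ) + 1 with hc
  have hcpos : ∀ n, 0 < c n := fun n => by positivity
  set F : ℕ → ℂ → A := fun n z => ∫ t : ℝ, Complex.exp (-(t - c n * z) ^ 2) • d.α (t / c n) a with hF
  have hgc : ∀ n, Continuous fun t : ℝ => d.α (t / c n) a := fun n =>
    (d.α_cont a).comp (by fun_prop)
  have hFd : ∀ n, Differentiable ℂ (F n) := fun n =>
    (gauss_differentiable (hgc n) ‖a‖ (fun t => (d.norm_α _ _).le)).comp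
      (g := fun w : ℂ => ∫ t : ℝ, Complex.exp (-(t - w) ^ 2) • d.α (t / c n) a)
      (f := fun z : ℂ => (c n : ℂ) * z) (by fun_prop)
  have hgi : Integrable fun t : ℝ => Complex.exp (-(t : ℂ) ^ 2) := by
    have := integrable_cexp_neg_mul_sq (b := 1) (by simp)
    simpa using this
  have hFi : ∀ n (s : ℝ), Integrable fun t : ℝ => Complex.exp (-(t : ℂ) ^ 2) • d.α (t / c n) a := by
    intro n s
    refine (hgi.norm.mul_const ‖a‖).mono' (Continuous.aestronglyMeasurable ?_) ?_
    · have := hgc n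
      fun_prop
    · exact Eventually.of_forall fun t => by rw [norm_smul, d.norm_α]
  have hext : ∀ n, d.IsAnalyticExt (F n 0) (F n) := by
    intro n
    refine ⟨hFd n, fun s => ?_⟩
    have e1 : F n 0 = ∫ t : ℝ, Complex.exp (-(t : ℂ) ^ 2) • d.α (t / c n) a := by
      simp [hF]
    rw [e1, ← Dynamics.αL_apply, ← ContinuousLinearMap.integral_comp_comm _ (hFi n s)]
    simp only [hF]
    rw [← integral_add_right_eq_self _ (c n * s)]
    congr 1
    ext t
    rw [map_smul, Dynamics.αL_apply, ← d.α_add]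
    congr 2
    · push_cast; ring_nf
    · congr 1
      have := (hcpos n).ne'
      field_simp
      ring
  set I₀ : ℂ := ∫ t : ℝ, Complex.exp (-(t : ℂ) ^ 2) with hI
  have hI0 : I₀ ≠ 0 := by
    have h1 : I₀ = ((Real.sqrt Real.pi : ℝ) : ℂ) := by
      rw [hI]
      have := integral_gaussian 1
      rw [div_one] at this
      rw [← this, ← integral_complex_ofReal]
      congr 1; ext t; push_cast; ring_nf
    rw [h1]
    exact_mod_cast (Real.sqrt_pos.2 Real.pi_pos).ne'
  have hlim : Tendsto (fun n => F n 0) atTop (𝓝 (I₀ • a)) := by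
    have e1 : ∀ n, F n 0 = ∫ t : ℝ, Complex.exp (-(t : ℂ) ^ 2) • d.α (t / c n) a := by
      intro n; simp [hF]
    simp only [e1]
    rw [hI, ← integral_smul_const]
    refine tendsto_integral_of_dominated_convergence
      (fun t => ‖Complex.exp (-(t : ℂ) ^ 2)‖ * ‖a‖)
      (fun n => (hFi n 0).aestronglyMeasurable) (hgi.norm.mul_const _) ?_ ?_
    · intro n
      exact Eventually.of_forall fun t => by rw [norm_smul, d.norm_α]
    · refine Eventually.of_forall fun t => ?_
      refine Tendsto.const_smul ?_ _
      have h1 : Tendsto (fun n => t / c n) atTop (𝓝 0) :=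
        tendsto_const_nhds.div_atTop (tendsto_atTop_add_const_right _ _ tendsto_natCast_atTop_atTop)
      have := ((d.α_cont a).tendsto 0).comp h1
      rw [d.α_zero] at this
      exact this
  have hlim2 : Tendsto (fun n => I₀⁻¹ • F n 0) atTop (𝓝 a) := by
    have := hlim.const_smul I₀⁻¹
    rwa [smul_smul, inv_mul_cancel₀ hI0, one_smul] at this
  exact mem_closure_of_tendsto hlim2 (Eventually.of_forall fun n => ⟨_, (hext n).smul _⟩)

theorem graph_symm {H : Type*} [NormedAddCommGroup H] [InnerProductSpace ℂ H] [CompleteSpace H]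
    (G : Submodule ℂ (WithLp 2 (H × H)))
    (hsym : ∀ p ∈ G, ∀ q ∈ G, ⟪p.snd, q.fst⟫_ℂ = ⟪p.fst, q.snd⟫_ℂ)
    (h1 : ∀ u : H, (∀ p ∈ G, ⟪p.snd + Complex.I • p.fst, u⟫_ℂ = 0) → u = 0)
    (h2 : ∀ u : H, (∀ p ∈ G, ⟪p.snd + (-Complex.I) • p.fst, u⟫_ℂ = 0) → u = 0)
    {u u' v v' : H}
    (hu : ∀ p ∈ G, ⟪p.snd, u⟫_ℂ = ⟪p.fst, u'⟫_ℂ)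
    (hv : ∀ p ∈ G, ⟪p.snd, v⟫_ℂ = ⟪p.fst, v'⟫_ℂ) :
    ⟪u', v⟫_ℂ = ⟪u, v'⟫_ℂ := by
  have hfst : Continuous fun q : WithLp 2 (H × H) => q.fst := continuous_fst.comp (WithLp.prod_continuous_ofLp 2 H H)
  have hsnd : Continuous fun q : WithLp 2 (H × H) => q.snd := continuous_snd.comp (WithLp.prod_continuous_ofLp 2 H H)
  set K := G.topologicalClosure with hK
  have hKc : IsClosed (K : Set (WithLp 2 (H × H))) := G.isClosed_topologicalClosure
  have : CompleteSpace K := hKc.completeSpace_coe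
  have hGK : G ≤ K := G.le_topologicalClosure
  set x : WithLp 2 (H × H) := WithLp.toLp 2 (u, u') with hx
  have hP : K.starProjection x ∈ K := K.starProjection_apply_mem x
  have hy : x - K.starProjection x ∈ Kᗮ := K.sub_starProjection_mem_orthogonal x
  have hPs : ∀ p ∈ G, ∀ q ∈ K, ⟪p.snd, q.fst⟫_ℂ = ⟪p.fst, q.snd⟫_ℂ := by
    intro p hp q hq
    have hcl : IsClosed {q : WithLp 2 (H × H) | ⟪p.snd, q.fst⟫_ℂ = ⟪p.fst, q.snd⟫_ℂ} :=
      isClosed_eq (continuous_const.inner hfst) (continuous_const.inner hsnd)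
    exact closure_minimal (fun q hq => hsym p hp q hq) hcl hq
  set P := K.starProjection x with hPdef
  have ha : ∀ p ∈ G, ⟪p.snd, (x - P).fst⟫_ℂ = ⟪p.fst, (x - P).snd⟫_ℂ := by
    intro p hp
    have e1 : (x - P).fst = u - P.fst := rfl
    have e2 : (x - P).snd = u' - P.snd := rfl
    rw [e1, e2, inner_sub_right, inner_sub_right, hu p hp, hPs p hp P hP]
  have hb : ∀ p ∈ G, ⟪p.fst, (x - P).fst⟫_ℂ + ⟪p.snd, (x - P).snd⟫_ℂ = 0 := by
    intro p hp
    have := (Submodule.mem_orthogonal K _).1 hy p (hGK hp)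
    rwa [WithLp.prod_inner_apply] at this
  have z1 : Complex.I • (x - P).fst + (x - P).snd = 0 := by
    apply h1
    intro p hp
    have a := ha p hp
    have b := hb p hp
    simp only [inner_add_left, inner_add_right, inner_smul_left, inner_smul_right, Complex.conj_I]
    linear_combination Complex.I * a + b - ⟪p.fst, (x - P).fst⟫_ℂ * Complex.I_mul_I
  have z2 : (-Complex.I) • (x - P).fst + (x - P).snd = 0 := by
    apply h2
    intro p hp
    have a := ha p hp
    have b := hb p hp
    simp only [inner_add_left, inner_add_right, inner_smul_left, inner_smul_right, Complex.conj_I,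
      map_neg]
    linear_combination -Complex.I * a + b - ⟪p.fst, (x - P).fst⟫_ℂ * Complex.I_mul_I
  have z3 : (x - P).snd = 0 := by
    have : (2 : ℂ) • (x - P).snd = 0 := by
      rw [two_smul]
      calc _ = (Complex.I • (x - P).fst + (x - P).snd) +
            ((-Complex.I) • (x - P).fst + (x - P).snd) := by rw [neg_smul]; abel
        _ = 0 := by rw [z1, z2, add_zero]
    simpa using this
  have z4 : (x - P).fst = 0 := by
    rw [z3, add_zero] at z1
    simpa using z1
  have e1 : u = P.fst := sub_eq_zero.1 (show u - P.fst = 0 from z4)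
  have e2 : u' = P.snd := sub_eq_zero.1 (show u' - P.snd = 0 from z3)
  have hcl : IsClosed {q : WithLp 2 (H × H) | ⟪q.snd, v⟫_ℂ = ⟪q.fst, v'⟫_ℂ} :=
    isClosed_eq (hsnd.inner continuous_const) (hfst.inner continuous_const)
  have := closure_minimal (fun q hq => hv q hq) hcl hP
  rw [e1, e2]
  exact this

/-- The hypotheses of the theorem, bundled. -/
structure KD {A : Type*} [CStarAlgebra A]
    {Hs : Type*} [NormedAddCommGroup Hs] [InnerProductSpace ℂ Hs] [CompleteSpace Hs]
    (S : GradedDyn A) (β : ℝ) (ω : A → ℂ)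
    (π : A →⋆ₐ[ℂ] (Hs →L[ℂ] Hs)) (Ω : Hs) (J : Hs → Hs) (V : Hs →L[ℂ] Hs) : Prop where
  hω : S.toDynamics.IsKMS β ω
  hinv : ∀ a, ω (S.γ a) = ω a
  hcyc : Dense (Set.range fun a : A => π a Ω)
  hrep : ∀ a : A, ω a = ⟪Ω, π a Ω⟫_ℂ
  hJ_add : ∀ ξ η, J (ξ + η) = J ξ + J η
  hJ_smul : ∀ (z : ℂ) (ξ), J (z • ξ) = starRingEnd ℂ z • J ξ
  hJ_inner : ∀ ξ η, ⟪J ξ, J η⟫_ℂ = ⟪η, ξ⟫_ℂ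
  hJ_invol : ∀ ξ, J (J ξ) = ξ
  hJ_Ω : J Ω = Ω
  hJ_mod : ∀ (a : A) (f : ℂ → A), S.toDynamics.IsAnalyticExt a f →
      J (π (f (Complex.I * β / 2)) Ω) = π (star a) Ω
  hV_invol : ∀ ξ, V (V ξ) = ξ
  hV_Ω : V Ω = Ω
  hV_impl : ∀ (a : A) (ξ), V (π a (V ξ)) = π (S.γ a) ξ

set_option linter.unusedSectionVars false

namespace KD

variable {Hs : Type*} [NormedAddCommGroup Hs] [InnerProductSpace ℂ Hs] [CompleteSpace Hs]
  {S : GradedDyn A} {β : ℝ} {ω : A → ℂ} {π : A →⋆ₐ[ℂ] (Hs →L[ℂ] Hs)} {Ω : Hs} {J : Hs → Hs}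
  {V : Hs →L[ℂ] Hs}

theorem norm_J (h : KD S β ω π Ω J V) (ξ : Hs) : ‖J ξ‖ = ‖ξ‖ := by
  have := h.hJ_inner ξ ξ
  rw [inner_self_eq_norm_sq_to_K, inner_self_eq_norm_sq_to_K] at this
  have h2 : ‖J ξ‖ ^ 2 = ‖ξ‖ ^ 2 := by exact_mod_cast this
  exact (sq_eq_sq₀ (norm_nonneg _) (norm_nonneg _)).1 h2

/-- `J` as a bounded antilinear map. -/
def Jc (h : KD S β ω π Ω J V) : Hs →L⋆[ℂ] Hs :=
  LinearMap.mkContinuous { toFun := J, map_add' := h.hJ_add, map_smul' := h.hJ_smul } 1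
    (fun ξ => by simpa using (h.norm_J ξ).le)

theorem continuous_J (h : KD S β ω π Ω J V) : Continuous J := h.Jc.continuous

/-- `J X J`. -/
def cj (h : KD S β ω π Ω J V) (X : Hs →L[ℂ] Hs) : Hs →L[ℂ] Hs := h.Jc.comp (X.comp h.Jc)

theorem cj_apply (h : KD S β ω π Ω J V) (X : Hs →L[ℂ] Hs) (ξ : Hs) : h.cj X ξ = J (X (J ξ)) := rfl

theorem J_left (h : KD S β ω π Ω J V) (ξ η : Hs) : ⟪J ξ, η⟫_ℂ = ⟪J η, ξ⟫_ℂ := by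
  have := h.hJ_inner ξ (J η)
  rwa [h.hJ_invol] at this

theorem J_right (h : KD S β ω π Ω J V) (ξ η : Hs) : ⟪ξ, J η⟫_ℂ = ⟪η, J ξ⟫_ℂ := by
  have := h.hJ_inner (J ξ) η
  rwa [h.hJ_invol] at this

theorem star_inner (X : Hs →L[ℂ] Hs) (ξ η : Hs) : ⟪star X ξ, η⟫_ℂ = ⟪ξ, X η⟫_ℂ := by
  rw [ContinuousLinearMap.star_eq_adjoint, ContinuousLinearMap.adjoint_inner_left]

theorem inner_star (X : Hs →L[ℂ] Hs) (ξ η : Hs) : ⟪ξ, star X η⟫_ℂ = ⟪X ξ, η⟫_ℂ := by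
  rw [ContinuousLinearMap.star_eq_adjoint, ContinuousLinearMap.adjoint_inner_right]

theorem pi_inner (a : A) (ξ η : Hs) : ⟪π (star a) ξ, η⟫_ℂ = ⟪ξ, π a η⟫_ℂ := by
  rw [map_star, star_inner]

theorem inner_pi (a : A) (ξ η : Hs) : ⟪ξ, π (star a) η⟫_ℂ = ⟪π a ξ, η⟫_ℂ := by
  rw [map_star, inner_star]

theorem pi_mul (a b : A) (ξ : Hs) : π (a * b) ξ = π a (π b ξ) := by
  rw [map_mul]; rfl

theorem continuous_pi (π : A →⋆ₐ[ℂ] (Hs →L[ℂ] Hs)) (ξ : Hs) : Continuous fun a => π a ξ := by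
  have : Continuous fun a => π a :=
    AddMonoidHomClass.continuous_of_bound π 1
      (fun a => by simpa using NonUnitalStarAlgHom.norm_apply_le π a)
  fun_prop

/-- `a ↦ π a ξ` as a continuous linear map. -/
def piL (π : A →⋆ₐ[ℂ] (Hs →L[ℂ] Hs)) (ξ : Hs) : A →L[ℂ] Hs :=
  { toFun := fun a => π a ξ
    map_add' := fun a b => by simp
    map_smul' := fun c a => by simp
    cont := continuous_pi π ξ }

theorem J_star (h : KD S β ω π Ω J V) {a : A} {f : ℂ → A} (hf : S.toDynamics.IsAnalyticExt a f) :
    J (π (star a) Ω) = π (f (Complex.I * β / 2)) Ω := by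
  rw [← h.hJ_mod a f hf, h.hJ_invol]

theorem J_ana (h : KD S β ω π Ω J V) {a : A} {f : ℂ → A} (hf : S.toDynamics.IsAnalyticExt a f) :
    J (π a Ω) = π (star (f (-(Complex.I * β / 2)))) Ω := by
  have := h.hJ_mod _ _ (hf.shift (-(Complex.I * β / 2)))
  beta_reduce at this
  rwa [neg_add_cancel, hf.at_zero] at this

theorem dense_ana (h : KD S β ω π Ω J V) :
    Dense ((fun a => π a Ω) '' {a : A | ∃ f, S.toDynamics.IsAnalyticExt a f}) :=
  DenseRange.dense_image h.hcyc (continuous_pi π Ω) S.toDynamics.dense_analytic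

theorem ext_inner_dense {s : Set Hs} (hs : Dense s) {x y : Hs}
    (hxy : ∀ v ∈ s, ⟪v, x⟫_ℂ = ⟪v, y⟫_ℂ) : x = y := by
  refine ext_inner_left ℂ fun v => ?_
  have hcl : IsClosed {v : Hs | ⟪v, x⟫_ℂ = ⟪v, y⟫_ℂ} := 
    isClosed_eq (continuous_id.inner continuous_const) (continuous_id.inner continuous_const)
  exact closure_minimal (fun v hv => hxy v hv) hcl (hs v)

theorem ext_op_dense {s : Set Hs} (hs : Dense s) {X Y : Hs →L[ℂ] Hs}
    (hxy : ∀ v ∈ s, X v = Y v) : X = Y := by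
  ext v
  have hcl : IsClosed {v : Hs | X v = Y v} := isClosed_eq X.continuous Y.continuous
  exact closure_minimal (fun v hv => hxy v hv) hcl (hs v)

theorem cj_mul_apply (h : KD S β ω π Ω J V) {e : A} {f : ℂ → A}
    (hf : S.toDynamics.IsAnalyticExt e f) (b : A) :
    h.cj (π (star e)) (π b Ω) = π (b * f (Complex.I * β / 2)) Ω := by
  have hcl : IsClosed {b : A | h.cj (π (star e)) (π b Ω) = π (b * f (Complex.I * β / 2)) Ω} :=
    isClosed_eq ((h.cj _).continuous.comp (continuous_pi π Ω))
      ((continuous_pi π Ω).comp (by fun_prop))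
  refine closure_minimal ?_ hcl (S.toDynamics.dense_analytic b)
  rintro b ⟨g, hg⟩
  change h.cj (π (star e)) (π b Ω) = π (b * f (Complex.I * β / 2)) Ω
  have hm := h.J_star ((hg.shift (-(Complex.I * β / 2))).mul hf)
  beta_reduce at hm
  rw [neg_add_cancel, hg.at_zero, star_mul, pi_mul, ← h.J_ana hg] at hm
  rw [cj_apply, hm]

theorem cj_comm (h : KD S β ω π Ω J V) (c d : A) (ξ : Hs) :
    h.cj (π c) (π d ξ) = π d (h.cj (π c) ξ) := by
  have hcl : IsClosed {c : A | ∀ d ξ, h.cj (π c) (π d ξ) = π d (h.cj (π c) ξ)} := by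
    simp only [Set.ofPred_forall]
    refine isClosed_iInter fun d => isClosed_iInter fun ξ => isClosed_eq ?_ ?_
    · exact h.continuous_J.comp (continuous_pi π _)
    · exact (π d).continuous.comp (h.continuous_J.comp (continuous_pi π _))
  have hd : Dense (star '' {a : A | ∃ f, S.toDynamics.IsAnalyticExt a f}) :=
    DenseRange.dense_image (star_involutive.surjective.denseRange) continuous_star
      S.toDynamics.dense_analytic
  refine closure_minimal ?_ hcl (hd c) d ξ
  rintro _ ⟨e, ⟨f, hf⟩, rfl⟩ d ξ
  have : (h.cj (π (star e))).comp (π d) = (π d).comp (h.cj (π (star e))) := by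
    refine ext_op_dense h.hcyc ?_
    rintro _ ⟨b, rfl⟩
    simp only [ContinuousLinearMap.comp_apply]
    rw [← pi_mul, h.cj_mul_apply hf, h.cj_mul_apply hf, ← pi_mul, mul_assoc]
  exact DFunLike.congr_fun this ξ

theorem cj_Ω (h : KD S β ω π Ω J V) (c : A) : h.cj (π c) Ω = J (π c Ω) := by
  rw [cj_apply, h.hJ_Ω]

theorem dense_cj (h : KD S β ω π Ω J V) : Dense (Set.range fun c => h.cj (π c) Ω) := by
  have hs : Function.Surjective J := fun x => ⟨J x, h.hJ_invol x⟩
  have : Dense (J '' (Set.range fun a : A => π a Ω)) :=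
    DenseRange.dense_image hs.denseRange h.continuous_J h.hcyc
  convert this using 1
  ext x
  simp [h.cj_Ω]

theorem mem_comm (X : Hs →L[ℂ] Hs) : X ∈ Set.centralizer (Set.range fun a => π a) ↔
    ∀ a ξ, X (π a ξ) = π a (X ξ) := by
  rw [Set.mem_centralizer_iff]
  constructor
  · intro hX a ξ
    exact (DFunLike.congr_fun (hX (π a) ⟨a, rfl⟩) ξ).symm
  · rintro hX _ ⟨a, rfl⟩
    ext ξ
    exact (hX a ξ).symm

theorem mem_env (R : Hs →L[ℂ] Hs) : R ∈ envVN π ↔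
    ∀ X : Hs →L[ℂ] Hs, (∀ a ξ, X (π a ξ) = π a (X ξ)) → ∀ ξ, R (X ξ) = X (R ξ) := by
  rw [envVN, Set.mem_centralizer_iff]
  constructor
  · intro hR X hX ξ
    exact (DFunLike.congr_fun (hR X ((mem_comm X).2 hX)) ξ).symm
  · intro hR X hX
    ext ξ
    exact (hR X ((mem_comm X).1 hX) ξ).symm

theorem env_cj (h : KD S β ω π Ω J V) {R : Hs →L[ℂ] Hs} (hR : R ∈ envVN π) (c : A) (ξ : Hs) :
    R (h.cj (π c) ξ) = h.cj (π c) (R ξ) :=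
  (mem_env R).1 hR _ (fun a ξ => h.cj_comm c a ξ) ξ

theorem separating (h : KD S β ω π Ω J V) {R R' : Hs →L[ℂ] Hs} (hR : R ∈ envVN π)
    (hR' : R' ∈ envVN π) (hΩ : R Ω = R' Ω) : R = R' := by
  refine ext_op_dense h.dense_cj ?_
  rintro _ ⟨c, rfl⟩
  simp only
  rw [h.env_cj hR, h.env_cj hR', hΩ]

theorem env_unique (h : KD S β ω π Ω J V) {R R' : Hs →L[ℂ] Hs} (hR : R ∈ envVN π)
    (hR' : R' ∈ envVN π) (he : ∀ a, ⟪Ω, π a (R Ω)⟫_ℂ = ⟪Ω, π a (R' Ω)⟫_ℂ) : R = R' := by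
  refine h.separating hR hR' (ext_inner_dense h.hcyc ?_)
  rintro _ ⟨a, rfl⟩
  have := he (star a)
  rwa [inner_pi, inner_pi] at this

theorem sym (h : KD S β ω π Ω J V) {a b : A} {f g : ℂ → A} (hf : S.toDynamics.IsAnalyticExt a f)
    (hg : S.toDynamics.IsAnalyticExt b g) :
    ⟪π (f (Complex.I * β / 2)) Ω, π b Ω⟫_ℂ = ⟪π a Ω, π (g (Complex.I * β / 2)) Ω⟫_ℂ := by
  have e1 : ⟪π (f (Complex.I * β / 2)) Ω, π b Ω⟫_ℂ =
      ⟪π (star (g (-(Complex.I * β / 2)))) Ω, π (star a) Ω⟫_ℂ := by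
    rw [← h.J_ana hg, ← h.hJ_mod a f hf, h.hJ_inner]
  have e2 := h.hω.2 (star a) _ _ _ hf.star (hg.shift (-(Complex.I * β / 2)))
  rw [show -(Complex.I * β / 2) + Complex.I * β = Complex.I * β / 2 by ring] at e2
  rw [h.hrep, h.hrep, pi_mul, pi_mul, inner_pi] at e2
  rw [e1, e2, pi_inner]

/-- The graph of the modular operator on analytic vectors. -/
def graph (_h : KD S β ω π Ω J V) : Submodule ℂ (WithLp 2 (Hs × Hs)) where
  carrier := {p | ∃ a f, S.toDynamics.IsAnalyticExt a f ∧
    p = WithLp.toLp 2 (π a Ω, π (f (Complex.I * β / 2)) Ω)}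
  add_mem' := by
    rintro _ _ ⟨a, f, hf, rfl⟩ ⟨b, g, hg, rfl⟩
    refine ⟨a + b, _, hf.add hg, ?_⟩
    simp only [map_add, add_apply]
    rfl
  zero_mem' := by
    refine ⟨_, _, S.toDynamics.isAnalyticExt_one.smul 0, ?_⟩
    simp only [zero_smul, map_zero, zero_apply]
    rfl
  smul_mem' := by
    rintro c _ ⟨a, f, hf, rfl⟩
    refine ⟨_, _, hf.smul c, ?_⟩
    simp only [map_smul, smul_apply]
    rfl

theorem range_dense (h : KD S β ω π Ω J V) (c : ℂ) (hc : ‖c‖ = 1) (hc1 : c ≠ -1) (u : Hs)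
    (hu : ∀ a f, S.toDynamics.IsAnalyticExt a f →
      ⟪π (f (Complex.I * β / 2)) Ω + c • π a Ω, u⟫_ℂ = 0) : u = 0 := by
  have hu' : ∀ a f, S.toDynamics.IsAnalyticExt a f →
      ⟪u, π (f (Complex.I * β / 2)) Ω⟫_ℂ = (-c) * ⟪u, π a Ω⟫_ℂ := by
    intro a f hf
    have := hu a f hf
    rw [inner_eq_zero_symm, inner_add_right, inner_smul_right] at this
    linear_combination this
  set φ : A →L[ℂ] ℂ := (innerSL ℂ u).comp (piL π Ω) with hφ
  have hφa : ∀ a, φ a = ⟪u, π a Ω⟫_ℂ := fun a => rfl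
  refine ext_inner_dense h.dense_ana (y := 0) ?_
  rintro _ ⟨a, ⟨f, hf⟩, rfl⟩
  rw [inner_zero_right, inner_eq_zero_symm]
  have hper : ∀ s : ℂ, φ (f (Complex.I * ((β / 2 : ℝ) : ℂ) * (s + 1))) =
      (-c) * φ (f (Complex.I * ((β / 2 : ℝ) : ℂ) * s)) := by
    intro s
    have := hu' _ _ (hf.shift (Complex.I * ((β / 2 : ℝ) : ℂ) * s))
    rw [hφa, hφa, ← this]
    congr 4
    push_cast; ring
  have hk := hf.const φ (β / 2) (-c) (by rwa [norm_neg]) hper 1 0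
  have hp := hper 0
  rw [zero_add, hk, mul_zero, hf.at_zero] at hp
  rw [hφa] at hp
  have : (1 + c) * ⟪u, π a Ω⟫_ℂ = 0 := by linear_combination hp
  rcases mul_eq_zero.1 this with h0 | h0
  · exact absurd (by linear_combination h0) hc1
  · exact h0

theorem comm_star {X : Hs →L[ℂ] Hs} (hX : ∀ a ξ, X (π a ξ) = π a (X ξ)) :
    ∀ a ξ, star X (π a ξ) = π a (star X ξ) := by
  intro a ξ
  refine ext_inner_left ℂ fun η => ?_
  rw [inner_star]
  have : π a = π (star (star a)) := by rw [star_star]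
  rw [this, inner_pi, inner_pi, inner_star, hX]

theorem key_inner (h : KD S β ω π Ω J V) {X Y : Hs →L[ℂ] Hs}
    (hX : ∀ a ξ, X (π a ξ) = π a (X ξ))
    (hY : ∀ c ξ, Y (h.cj (π c) ξ) = h.cj (π c) (Y ξ)) :
    ⟪X Ω, Y Ω⟫_ℂ = ⟪star Y Ω, star X Ω⟫_ℂ := by
  have := graph_symm h.graph (u := J (star X Ω)) (u' := X Ω) (v := Y Ω) (v' := J (star Y Ω))
    ?_ ?_ ?_ ?_ ?_
  · rw [this, h.hJ_inner]
  · rintro _ ⟨a, f, hf, rfl⟩ _ ⟨b, g, hg, rfl⟩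
    exact h.sym hf hg
  · intro u hu
    refine h.range_dense Complex.I (by simp) ?_ u (fun a f hf => hu _ ⟨a, f, hf, rfl⟩)
    intro hI; simpa using congrArg Complex.re hI
  · intro u hu
    refine h.range_dense (-Complex.I) (by simp) ?_ u (fun a f hf => hu _ ⟨a, f, hf, rfl⟩)
    intro hI; simpa using congrArg Complex.re hI
  · rintro _ ⟨a, f, hf, rfl⟩
    change ⟪π (f (Complex.I * β / 2)) Ω, J (star X Ω)⟫_ℂ = ⟪π a Ω, X Ω⟫_ℂ
    rw [h.J_right, h.hJ_mod a f hf, star_inner, hX, inner_pi]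
  · rintro _ ⟨a, f, hf, rfl⟩
    change ⟪π (f (Complex.I * β / 2)) Ω, Y Ω⟫_ℂ = ⟪π a Ω, J (star Y Ω)⟫_ℂ
    rw [h.J_right, star_inner, ← h.cj_Ω, hY, cj_apply, h.J_right, ← h.J_star hf, h.hJ_Ω, h.J_left, inner_pi]

theorem cj_inner (h : KD S β ω π Ω J V) (X : Hs →L[ℂ] Hs) (ξ η : Hs) :
    ⟪h.cj X ξ, η⟫_ℂ = ⟪ξ, h.cj (star X) η⟫_ℂ := by
  rw [cj_apply, cj_apply, h.J_left, h.J_right ξ, star_inner]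

theorem cj_star (h : KD S β ω π Ω J V) (X : Hs →L[ℂ] Hs) : star (h.cj X) = h.cj (star X) := by
  ext ξ
  refine ext_inner_left ℂ fun η => ?_
  rw [inner_star, cj_inner]

theorem comm_cj_star (h : KD S β ω π Ω J V) {Y : Hs →L[ℂ] Hs}
    (hY : ∀ c ξ, Y (h.cj (π c) ξ) = h.cj (π c) (Y ξ)) :
    ∀ c ξ, star Y (h.cj (π c) ξ) = h.cj (π c) (star Y ξ) := by
  intro c ξ
  refine ext_inner_left ℂ fun η => ?_
  have hc : h.cj (π c) = star (h.cj (π (star c))) := by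
    rw [cj_star, map_star, star_star]
  rw [inner_star, hc, inner_star, inner_star, inner_star, hY]

theorem commutant (h : KD S β ω π Ω J V) {Y : Hs →L[ℂ] Hs}
    (hY : ∀ c ξ, Y (h.cj (π c) ξ) = h.cj (π c) (Y ξ)) : Y ∈ envVN π := by
  rw [mem_env]
  have main : ∀ X : Hs →L[ℂ] Hs, (∀ a ξ, X (π a ξ) = π a (X ξ)) →
      Y.comp (star X) = (star X).comp Y := by
    intro X hX
    refine ext_op_dense h.hcyc ?_
    rintro _ ⟨d, rfl⟩
    refine ext_inner_dense h.dense_cj ?_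
    rintro _ ⟨c, rfl⟩
    have hk := h.key_inner (X := X * h.cj (π c)) (Y := Y * π d) ?_ ?_
    · rw [star_mul, star_mul, cj_star, ← map_star, ← map_star] at hk
      simp only [mul_apply_eq_comp] at hk
      simp only [ContinuousLinearMap.comp_apply]
      rw [inner_star, hk, pi_inner, ← h.cj_comm, map_star, ← h.cj_inner, ← h.comm_cj_star hY,
        star_inner, ← comm_star hX]
    · intro a ξ
      simp only [mul_apply_eq_comp]
      rw [h.cj_comm, hX]
    · intro c ξ
      simp only [mul_apply_eq_comp]
      rw [← h.cj_comm, hY]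
  intro X hX ξ
  have := main (star X) (comm_star hX)
  rw [star_star] at this
  exact DFunLike.congr_fun this ξ

theorem norm_sq (h : KD S β ω π Ω J V) (a : A) : ω (star a * a) = ((‖π a Ω‖ ^ 2 : ℝ) : ℂ) := by
  rw [h.hrep, pi_mul, inner_pi, inner_self_eq_norm_sq_to_K]
  push_cast; rfl

theorem V_pi (h : KD S β ω π Ω J V) (a : A) : V (π a Ω) = π (S.γ a) Ω := by
  rw [← h.hV_impl, h.hV_Ω]

theorem dom_bound (h : KD S β ω π Ω J V) {ρ : A → ℂ} (hd : Dominated ω ρ) (a b : A) :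
    ‖ρ (star a * b)‖ ≤ ‖π a Ω‖ * ‖π b Ω‖ := by
  have := hd a b
  rw [h.norm_sq, h.norm_sq] at this
  have h2 : ‖ρ (star a * b)‖ ^ 2 ≤ ‖π a Ω‖ ^ 2 * ‖π b Ω‖ ^ 2 := by exact_mod_cast this
  rw [← mul_pow] at h2
  exact (pow_le_pow_iff_left₀ (norm_nonneg _) (by positivity) two_ne_zero).1 h2

theorem exists_T (h : KD S β ω π Ω J V) {ρ : A → ℂ} (hl : IsLinearMap ℂ ρ) (hd : Dominated ω ρ) :
    ∃ T : Hs →L[ℂ] Hs, (∀ a b, ρ (star a * b) = ⟪π a Ω, T (π b Ω)⟫_ℂ) ∧ ∀ ξ, ‖T ξ‖ ≤ ‖ξ‖ := by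
  set e : A →ₗ[ℂ] Hs := (piL π Ω).toLinearMap with he
  have hea : ∀ a, e a = π a Ω := fun a => rfl
  have hde : DenseRange e := h.hcyc
  set F : A → A →ₗ[ℂ] ℂ := fun a => (hl.mk' ρ).comp (LinearMap.mulLeft ℂ (star a)) with hF
  have hFa : ∀ a b, F a b = ρ (star a * b) := fun a b => rfl
  have hFb : ∀ a b, ‖F a b‖ ≤ ‖π a Ω‖ * ‖e b‖ := fun a b => h.dom_bound hd a b
  set ζ : A → Hs := fun a => (InnerProductSpace.toDual ℂ Hs).symm ((F a).extendOfNorm e) with hζ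
  have hζi : ∀ a b, ⟪ζ a, π b Ω⟫_ℂ = ρ (star a * b) := by
    intro a b
    rw [hζ, InnerProductSpace.toDual_symm_apply, ← hea,
      LinearMap.extendOfNorm_eq hde ⟨_, hFb a⟩, hFa]
  have hζi' : ∀ a b, ⟪π b Ω, ζ a⟫_ℂ = starRingEnd ℂ (ρ (star a * b)) := by
    intro a b
    rw [← hζi, inner_conj_symm]
  have hζn : ∀ a, ‖ζ a‖ ≤ 1 * ‖e a‖ := by
    intro a
    rw [hζ, one_mul]
    simp only [LinearIsometryEquiv.norm_map]
    exact LinearMap.opNorm_extendOfNorm_le hde (norm_nonneg _) (hFb a)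
  set Z : A →ₗ[ℂ] Hs :=
    { toFun := ζ
      map_add' := by
        intro a a'
        refine ext_inner_dense h.hcyc ?_
        rintro _ ⟨b, rfl⟩
        simp only
        rw [inner_add_right, hζi', hζi', hζi', star_add, add_mul, hl.map_add, map_add]
      map_smul' := by
        intro c a
        refine ext_inner_dense h.hcyc ?_
        rintro _ ⟨b, rfl⟩
        simp only [RingHom.id_apply]
        rw [inner_smul_right, hζi', hζi', star_smul, smul_mul_assoc, hl.map_smul]
        simp } with hZ
  have hZa : ∀ a, Z a = ζ a := fun a => rfl
  refine ⟨star (Z.extendOfNorm e), fun a b => ?_, ?_⟩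
  · rw [inner_star, ← hea a, LinearMap.extendOfNorm_eq hde ⟨1, hζn⟩, hZa, hζi]
  · intro ξ
    have h1 : ‖Z.extendOfNorm e‖ ≤ 1 := LinearMap.opNorm_extendOfNorm_le hde zero_le_one hζn
    have h3 : ‖star (Z.extendOfNorm e)‖ ≤ 1 := by rwa [norm_star]
    have h2 := (star (Z.extendOfNorm e)).le_of_opNorm_le h3 ξ
    simpa using h2

theorem rhs_id (h : KD S β ω π Ω J V) {T : Hs →L[ℂ] Hs} (hT : star T = T)
    {a b : A} {f g : ℂ → A} (hf : S.toDynamics.IsAnalyticExt a f)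
    (hg : S.toDynamics.IsAnalyticExt b g) :
    ⟪π (star b) Ω, h.cj T (π a Ω)⟫_ℂ =
      ⟪π (star (f (-(Complex.I * β / 2)))) Ω, T (π (g (Complex.I * β / 2)) Ω)⟫_ℂ := by
  rw [cj_apply, h.J_right, h.J_star hg, h.J_ana hf]
  conv_lhs => rw [← hT]
  rw [star_inner]

theorem forward (h : KD S β ω π Ω J V) {ρ : A → ℂ}
    (hρ : TwistedKMSDom S.toDynamics S.γ β ω ρ) :
    ∃ R : Hs →L[ℂ] Hs, (R ∈ envVN π ∧ (∀ ξ, J (star R (J ξ)) = R (V ξ)) ∧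
          star R = R ∧ ‖R‖ ≤ 1) ∧ (∀ a : A, ρ a = ⟪Ω, π a (R Ω)⟫_ℂ) := by
  obtain ⟨⟨hl, hk⟩, hh, hd⟩ := hρ
  obtain ⟨T, hT, hTn⟩ := h.exists_T hl hd
  have hTs : star T = T := by
    refine ext_op_dense h.hcyc ?_
    rintro _ ⟨b, rfl⟩
    refine ext_inner_dense h.hcyc ?_
    rintro _ ⟨a, rfl⟩
    simp only
    rw [inner_star, ← hT, ← inner_conj_symm, ← hT, ← hh, star_mul, star_star]
  have hTc : ∀ a ξ, T (π a ξ) = π a (T ξ) := by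
    intro c
    have : T.comp (π c) = (π c).comp T := by
      refine ext_op_dense h.hcyc ?_
      rintro _ ⟨b, rfl⟩
      refine ext_inner_dense h.hcyc ?_
      rintro _ ⟨a, rfl⟩
      simp only [ContinuousLinearMap.comp_apply]
      rw [← pi_mul, ← hT, ← pi_inner, ← pi_mul, ← hT, star_mul, star_star, mul_assoc]
    exact fun ξ => DFunLike.congr_fun this ξ
  have hρT : ∀ a, ρ a = ⟪Ω, T (π a Ω)⟫_ℂ := by
    intro a
    have := hT 1 a
    simpa using this
  set w : ℂ := Complex.I * β / 2 with hw
  have hconst : ∀ p F, S.toDynamics.IsAnalyticExt p F → ρ (F w) = ρ p := by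
    intro p F hF
    set φ : A →L[ℂ] ℂ := (innerSL ℂ Ω).comp (T.comp (piL π Ω)) with hφ
    have hφa : ∀ a, φ a = ρ a := fun a => (hρT a).symm
    have := hF.const φ β 1 (by simp) (fun s => by
      have e := hk 1 _ _ _ S.toDynamics.isAnalyticExt_one (hF.shift (Complex.I * β * s))
      beta_reduce at e
      rw [one_mul, map_one, mul_one] at e
      rw [one_mul, hφa, hφa, ← e]
      congr 2; ring) (1 / 2) 0
    rw [mul_zero, hF.at_zero, hφa, hφa] at this
    rw [← this]
    congr 2
    rw [hw]; ring
  have hTV : T.comp V = h.cj T := by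
    refine ext_op_dense h.dense_ana ?_
    rintro _ ⟨a, ⟨f, hf⟩, rfl⟩
    refine ext_inner_dense h.dense_ana ?_
    rintro _ ⟨b', ⟨g', hg'⟩, rfl⟩
    simp only [ContinuousLinearMap.comp_apply]
    have hg := hg'.star
    set b := star b' with hb
    have hb' : b' = star b := by rw [hb, star_star]
    set g : ℂ → A := fun z => star (g' (starRingEnd ℂ z)) with hgdef
    rw [hb', h.rhs_id hTs hf hg, h.V_pi, ← hT, ← hT, star_star, star_star, ← hk a b f g hf hg]
    have := hconst _ _ ((hf.shift (-w)).mul (hg.shift w))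
    beta_reduce at this
    rw [neg_add_cancel, hf.at_zero] at this
    rw [← hw, ← this]
    congr 3
    rw [hw]; ring
  have hJT : ∀ ξ, h.cj T ξ = T (V ξ) := fun ξ => (DFunLike.congr_fun hTV ξ).symm
  have hRs : star (h.cj T) = h.cj T := by rw [cj_star, hTs]
  refine ⟨h.cj T, ⟨?_, ?_, hRs, ?_⟩, ?_⟩
  · refine h.commutant fun c ξ => ?_
    simp only [cj_apply, h.hJ_invol]
    rw [hTc]
  · intro ξ
    rw [hRs, hJT (V ξ), h.hV_invol, cj_apply, h.hJ_invol, h.hJ_invol]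
  · refine ContinuousLinearMap.opNorm_le_bound _ zero_le_one fun ξ => ?_
    rw [cj_apply, h.norm_J, one_mul, ← h.norm_J ξ]
    exact hTn _
  · intro a
    rw [hJT, h.hV_Ω, ← hTc, hρT]

theorem backward (h : KD S β ω π Ω J V) {R : Hs →L[ℂ] Hs} (hR : R ∈ envVN π)
    (hRt : ∀ ξ, J (star R (J ξ)) = R (V ξ)) (hRs : star R = R) (hRn : ‖R‖ ≤ 1) :
    TwistedKMSDom S.toDynamics S.γ β ω (fun a => ⟪Ω, π a (R Ω)⟫_ℂ) := by
  have hTV : ∀ ξ, h.cj R ξ = R (V ξ) := fun ξ => by rw [← hRt, hRs, cj_apply]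
  set T := h.cj R with hTdef
  have hTs : star T = T := by rw [hTdef, cj_star, hRs]
  have hTc : ∀ a ξ, T (π a ξ) = π a (T ξ) := by
    intro a ξ
    have := h.env_cj hR a (J ξ)
    rw [cj_apply, cj_apply, h.hJ_invol] at this
    rw [hTdef, cj_apply, this, h.hJ_invol, cj_apply]
  have hTΩ : T Ω = R Ω := by rw [hTV, h.hV_Ω]
  have hTn : ∀ ξ, ‖T ξ‖ ≤ ‖ξ‖ := by
    intro ξ
    rw [hTdef, cj_apply, h.norm_J, ← h.norm_J ξ]
    simpa using R.le_of_opNorm_le hRn (J ξ)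
  have hcT : h.cj T = R := by
    ext ξ
    rw [hTdef]; simp only [cj_apply, h.hJ_invol]
  set ρ : A → ℂ := fun a => ⟪Ω, π a (R Ω)⟫_ℂ with hρ
  have hρT : ∀ a b, ρ (star a * b) = ⟪π a Ω, T (π b Ω)⟫_ℂ := by
    intro a b
    rw [hρ]
    simp only
    rw [pi_mul, inner_pi, ← hTΩ, hTc]
  have hρm : ∀ a b, ρ (a * b) = ⟪π (star a) Ω, T (π b Ω)⟫_ℂ := by
    intro a b
    rw [← hρT, star_star]
  have hl : IsLinearMap ℂ ρ := by
    constructor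
    · intro a b; simp [hρ, inner_add_right]
    · intro c a; simp [hρ, inner_smul_right]
  set w : ℂ := Complex.I * β / 2 with hw
  have hid : ∀ a b f g, S.toDynamics.IsAnalyticExt a f → S.toDynamics.IsAnalyticExt b g →
      ρ (b * S.γ a) = ρ (f (-w) * g w) := by
    intro a b f g hf hg
    have := h.rhs_id hTs hf hg
    rw [hρm, hρm, ← h.V_pi, ← this, hcT, hTV, h.hV_invol]
  have hconst : ∀ p F, S.toDynamics.IsAnalyticExt p F → ρ (F w) = ρ p := by
    intro p F hF
    have := hid 1 p _ F S.toDynamics.isAnalyticExt_one hF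
    rw [map_one, mul_one, one_mul] at this
    exact this.symm
  refine ⟨⟨hl, ?_⟩, ?_, ?_⟩
  · intro a b f g hf hg
    rw [hid a b f g hf hg]
    have := hconst _ _ ((hf.shift (-w)).mul (hg.shift w))
    beta_reduce at this
    rw [neg_add_cancel, hf.at_zero] at this
    rw [← this]
    congr 3
    rw [hw]; ring
  · intro a
    have e1 := hρT a 1
    have e2 := hρT 1 a
    rw [mul_one] at e1
    rw [star_one, one_mul] at e2
    rw [e1, e2, inner_conj_symm, ← star_inner, hTs]
  · intro a b
    rw [h.norm_sq, h.norm_sq, hρT]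
    have h1 : ‖⟪π a Ω, T (π b Ω)⟫_ℂ‖ ≤ ‖π a Ω‖ * ‖π b Ω‖ :=
      (norm_inner_le_norm _ _).trans (mul_le_mul_of_nonneg_left (hTn _) (norm_nonneg _))
    have h2 : ‖⟪π a Ω, T (π b Ω)⟫_ℂ‖ ^ 2 ≤ ‖π a Ω‖ ^ 2 * ‖π b Ω‖ ^ 2 := by
      rw [← mul_pow]; exact pow_le_pow_left₀ (norm_nonneg _) h1 2
    exact_mod_cast h2

end KD

/-- Let `ω` be a `γ`-invariant `(α, β)`-KMS state with GNS triple
`(H, π, Ω)`, `M = π(A)''`, `J` the modular conjugation of `(M, Ω)` (characterized by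
`J π(α_{iβ/2}(a)) Ω = π(a*) Ω` for entire analytic `a`), and `V` the canonical
implementation of the grading. Then the map `Ξ` sending `ρ ∈ F_β(A, α, γ, ω)` to the
unique `R_ρ ∈ M` with `ρ(a) = ⟨Ω, π(a) R_ρ Ω⟩` is a bijection onto the selfadjoint part
of the unit ball of the `V`-twisted center `Z(M, V)`, and it preserves convex
combinations. -/
theorem twisted_kms_functionals_biject_twisted_center
    {A : Type*} [CStarAlgebra A]
    {Hs : Type*} [NormedAddCommGroup Hs] [InnerProductSpace ℂ Hs] [CompleteSpace Hs]
    (S : GradedDyn A) (β : ℝ) (ω : A → ℂ)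
    (hω : S.toDynamics.IsKMS β ω) (hinv : ∀ a, ω (S.γ a) = ω a)
    (π : A →⋆ₐ[ℂ] (Hs →L[ℂ] Hs)) (Ω : Hs)
    (hcyc : Dense (Set.range fun a : A => π a Ω))
    (hrep : ∀ a : A, ω a = ⟪Ω, π a Ω⟫_ℂ)
    -- the modular conjugation `J` of `(π(A)'', Ω)`:
    (J : Hs → Hs)
    (hJ_add : ∀ ξ η, J (ξ + η) = J ξ + J η)
    (hJ_smul : ∀ (z : ℂ) (ξ), J (z • ξ) = starRingEnd ℂ z • J ξ)
    (hJ_inner : ∀ ξ η, ⟪J ξ, J η⟫_ℂ = ⟪η, ξ⟫_ℂ)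
    (hJ_invol : ∀ ξ, J (J ξ) = ξ)
    (hJ_Ω : J Ω = Ω)
    (hJ_mod : ∀ (a : A) (f : ℂ → A), S.toDynamics.IsAnalyticExt a f →
      J (π (f (Complex.I * β / 2)) Ω) = π (star a) Ω)
    -- the canonical unitary implementation `V` of the grading:
    (V : Hs →L[ℂ] Hs)
    (hV_invol : ∀ ξ, V (V ξ) = ξ)
    (hV_Ω : V Ω = Ω)
    (hV_impl : ∀ (a : A) (ξ), V (π a (V ξ)) = π (S.γ a) ξ) :
    ∃ Ξ : (A → ℂ) → (Hs →L[ℂ] Hs),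
      (∀ ρ ∈ {ρ : A → ℂ | TwistedKMSDom S.toDynamics S.γ β ω ρ},
        (Ξ ρ ∈ envVN π ∧ ∀ a : A, ρ a = ⟪Ω, π a (Ξ ρ Ω)⟫_ℂ) ∧
        ∀ R ∈ envVN π, (∀ a : A, ρ a = ⟪Ω, π a (R Ω)⟫_ℂ) → R = Ξ ρ) ∧
      Set.BijOn Ξ
        {ρ : A → ℂ | TwistedKMSDom S.toDynamics S.γ β ω ρ}
        {R : Hs →L[ℂ] Hs | R ∈ envVN π ∧ (∀ ξ, J (star R (J ξ)) = R (V ξ)) ∧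
          star R = R ∧ ‖R‖ ≤ 1} ∧
      ∀ ρ₁ ∈ {ρ : A → ℂ | TwistedKMSDom S.toDynamics S.γ β ω ρ},
        ∀ ρ₂ ∈ {ρ : A → ℂ | TwistedKMSDom S.toDynamics S.γ β ω ρ},
        ∀ t : ℝ, 0 ≤ t → t ≤ 1 →
          Ξ (fun a => (t : ℂ) * ρ₁ a + (1 - (t : ℂ)) * ρ₂ a) =
            (t : ℂ) • Ξ ρ₁ + (1 - (t : ℂ)) • Ξ ρ₂ := by
  classical
  have h : KD S β ω π Ω J V := ⟨hω, hinv, hcyc, hrep, hJ_add, hJ_smul, hJ_inner, hJ_invol, hJ_Ω,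
    hJ_mod, hV_invol, hV_Ω, hV_impl⟩
  have hex : ∀ ρ : A → ℂ, ∃ R : Hs →L[ℂ] Hs, TwistedKMSDom S.toDynamics S.γ β ω ρ →
      ((R ∈ envVN π ∧ (∀ ξ, J (star R (J ξ)) = R (V ξ)) ∧ star R = R ∧ ‖R‖ ≤ 1) ∧
        (∀ a : A, ρ a = ⟪Ω, π a (R Ω)⟫_ℂ)) := by
    intro ρ
    by_cases hρ : TwistedKMSDom S.toDynamics S.γ β ω ρ
    · obtain ⟨R, hR⟩ := h.forward hρ
      exact ⟨R, fun _ => hR⟩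
    · exact ⟨0, fun hh => absurd hh hρ⟩
  choose Ξ hΞ using hex
  have huniq : ∀ ρ : A → ℂ, TwistedKMSDom S.toDynamics S.γ β ω ρ →
      ∀ R ∈ envVN π, (∀ a : A, ρ a = ⟪Ω, π a (R Ω)⟫_ℂ) → R = Ξ ρ := by
    intro ρ hρ R hR hRρ
    exact h.env_unique hR (hΞ ρ hρ).1.1 (fun a => by rw [← hRρ, (hΞ ρ hρ).2])
  refine ⟨Ξ, ?_, ⟨?_, ?_, ?_⟩, ?_⟩
  · intro ρ hρ
    exact ⟨⟨(hΞ ρ hρ).1.1, (hΞ ρ hρ).2⟩, huniq ρ hρ⟩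
  · intro ρ hρ
    exact (hΞ ρ hρ).1
  · intro ρ₁ h₁ ρ₂ h₂ he
    funext a
    rw [(hΞ ρ₁ h₁).2, (hΞ ρ₂ h₂).2, he]
  · rintro R ⟨hR, hRt, hRs, hRn⟩
    have hb := h.backward hR hRt hRs hRn
    exact ⟨_, hb, (huniq _ hb R hR (fun a => rfl)).symm⟩
  · intro ρ₁ h₁ ρ₂ h₂ t ht0 ht1
    obtain ⟨⟨a1, a2, a3, a4⟩, a5⟩ := hΞ ρ₁ h₁
    obtain ⟨⟨b1, b2, b3, b4⟩, b5⟩ := hΞ ρ₂ h₂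
    set R : Hs →L[ℂ] Hs := (t : ℂ) • Ξ ρ₁ + (1 - (t : ℂ)) • Ξ ρ₂ with hRdef
    have hR : R ∈ envVN π := by
      rw [KD.mem_env] at a1 b1 ⊢
      intro X hX ξ
      simp only [hRdef, add_apply, smul_apply, map_add, map_smul, a1 X hX, b1 X hX]
    have hRs : star R = R := by
      rw [hRdef, star_add, star_smul, star_smul, a3, b3]
      simp
    have hRt : ∀ ξ, J (star R (J ξ)) = R (V ξ) := by
      intro ξ
      rw [hRs]
      rw [a3] at a2
      rw [b3] at b2
      simp only [hRdef, add_apply, smul_apply, hJ_add, hJ_smul, a2, b2]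
      simp
    have hRn : ‖R‖ ≤ 1 := by
      refine (norm_add_le _ _).trans ?_
      have e : (1 - (t : ℂ)) = ((1 - t : ℝ) : ℂ) := by push_cast; rfl
      rw [norm_smul, norm_smul, e, Complex.norm_real, Complex.norm_real, Real.norm_of_nonneg ht0,
        Real.norm_of_nonneg (sub_nonneg.2 ht1)]
      nlinarith
    have hb := h.backward hR hRt hRs hRn
    have hfun : (fun a => ⟪Ω, π a (R Ω)⟫_ℂ) =
        (fun a => (t : ℂ) * ρ₁ a + (1 - (t : ℂ)) * ρ₂ a) := by
      funext a
      rw [a5, b5]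
      simp only [hRdef, add_apply, smul_apply, map_add, map_smul, inner_add_right,
        inner_smul_right]
    rw [← hfun]
    exact (huniq _ hb R hR (fun a => rfl)).symm

end
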